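/- Let A ⊆ ℂ and f : 𝔻 × A → ℂ be a holomorphic motion (i.e., f(·,a) is holomorphic for each a ∈ A, f(λ,·) is injective for each λ ∈ 𝔻, and f(0,·) = id). Then for each fixed λ ∈ 𝔻, the map a ↦ f(λ,a) extends to a continuous injection of the closure of A into ℂ. -/

import Mathlib

/-!
For distinct `a, p, q ∈ A` the ratio `(f z a - f z p) / (f z q - f z p)` is holomorphic in `z` and
omits `0` and `1`, so Schottky's theorem bounds `f z a` locally uniformly in `z` and in bounded
`a ∈ A`. (Schottky's theorem itself: a function omitting `0` and `1` lifts through `landauMap`, the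
lift misses a relatively dense set, and Bloch's theorem therefore bounds its derivative.)

If `K` bounds the zero-free function `f z a - f z b` on a disk about `0`, then
`log (K / ‖f z a - f z b‖)` is a nonnegative harmonic function of `z`, and Harnack's inequality
compares its values at `z` and at `0`. This gives Hölder estimates in both directions between
`dist a b` and `dist (f z a) (f z b)`: on bounded parts of `A`, both `f z` and its inverse are
uniformly continuous. Hence a filter on `A` at points of the closure is Cauchy if and only if its
image is, which yields both the extension and its injectivity.
-/

open Filter Set Metric Topology
open Complex (exp cos sin I)

section UniformExtension

variable {X Y : Type*} [UniformSpace X] [UniformSpace Y]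

lemma cauchy_map_iff_of_isUniformInducing_domRestrict {f : X → Y} {S : Set X} {F : Filter X}
    (hf : IsUniformInducing (S.domRestrict f)) (hS : S ∈ F) :
    Cauchy (map f F) ↔ Cauchy F := by
  have hF : map ((↑) : S → X) (comap (↑) F) = F :=
    map_comap_of_mem (by simpa only [Subtype.range_coe] using hS)
  calc Cauchy (map f F)
      ↔ Cauchy (map (S.domRestrict f) (comap (↑) F)) := by
        rw [domRestrict_eq, ← map_map, hF]
    _ ↔ Cauchy (comap ((↑) : S → X) F) := hf.cauchy_map_iff
    _ ↔ Cauchy (map ((↑) : S → X) (comap (↑) F)) := (isUniformInducing_val S).cauchy_map_iff.symm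
    _ ↔ Cauchy F := by rw [hF]

lemma eq_of_cauchy_nhdsWithin_sup [T2Space X] {A : Set X} {x y : X} (hx : x ∈ closure A)
    (hy : y ∈ closure A) (h : Cauchy (𝓝[A] x ⊔ 𝓝[A] y)) : x = y := by
  have := mem_closure_iff_nhdsWithin_neBot.mp hx
  have := mem_closure_iff_nhdsWithin_neBot.mp hy
  have hle : 𝓝[A] x ⊔ 𝓝[A] y ≤ 𝓝 x :=
    le_nhds_of_cauchy_adhp h
      ((ClusterPt.of_le_nhds (f := 𝓝[A] x) nhdsWithin_le_nhds).mono le_sup_left)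
  exact eq_of_nhds_neBot <| ‹(𝓝[A] y).NeBot›.mono <|
    le_inf (le_sup_right.trans hle) nhdsWithin_le_nhds

theorem exists_continuousOn_injOn_closure_of_isUniformInducing [T2Space X] [CompleteSpace Y]
    [T2Space Y] {A : Set X} {f : X → Y}
    (hf : ∀ x ∈ closure A, ∀ y ∈ closure A,
      ∃ S ∈ 𝓝 x ⊔ 𝓝 y, IsUniformInducing ((A ∩ S).domRestrict f)) :
    ∃ g : X → Y, ContinuousOn g (closure A) ∧ InjOn g (closure A) ∧ ∀ a ∈ A, g a = f a := by
  have hcauchy : ∀ x ∈ closure A, ∀ y ∈ closure A,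
      Cauchy (map f (𝓝[A] x ⊔ 𝓝[A] y)) ↔ Cauchy (𝓝[A] x ⊔ 𝓝[A] y) := by
    intro x hx y hy
    obtain ⟨S, hS, hfS⟩ := hf x hx y hy
    refine cauchy_map_iff_of_isUniformInducing_domRestrict hfS (inter_mem ?_ ?_)
    · exact ⟨self_mem_nhdsWithin, self_mem_nhdsWithin⟩
    · exact sup_le_sup nhdsWithin_le_nhds nhdsWithin_le_nhds hS
  have hlim : ∀ x ∈ closure A, ∃ z, Tendsto f (𝓝[A] x) (𝓝 z) := by
    intro x hx
    have := mem_closure_iff_nhdsWithin_neBot.mp hx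
    have hmap : Cauchy (map f (𝓝[A] x)) := by
      simpa only [sup_idem, cauchy_nhds.mono nhdsWithin_le_nhds, iff_true] using hcauchy x hx x hx
    exact cauchy_map_iff_exists_tendsto.mp hmap
  have hext : ∀ x ∈ closure A, map f (𝓝[A] x) ≤ 𝓝 (extendFrom A f x) :=
    fun x hx => tendsto_extendFrom (hlim x hx)
  refine ⟨extendFrom A f, continuousOn_extendFrom Subset.rfl hlim, ?_, ?_⟩
  · intro x hx y hy hxy
    have := mem_closure_iff_nhdsWithin_neBot.mp hx
    have hle : map f (𝓝[A] x ⊔ 𝓝[A] y) ≤ 𝓝 (extendFrom A f x) := by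
      rw [map_sup]
      exact sup_le (hext x hx) (hxy ▸ hext y hy)
    exact eq_of_cauchy_nhdsWithin_sup hx hy ((hcauchy x hx y hy).mp (cauchy_nhds.mono hle))
  · intro a ha
    exact tendsto_nhds_unique (Tendsto.mono_left (hext a (subset_closure ha))
      (pure_le_nhdsWithin ha)) (tendsto_pure_nhds f a)

end UniformExtension

lemma isUniformInducing_of_dist_le {X Y : Type*} [PseudoMetricSpace X] [PseudoMetricSpace Y]
    {φ : X → Y} {ω : ℝ → ℝ} (hω : Tendsto ω (𝓝 0) (𝓝 0))
    (hφ : ∀ a b, dist (φ a) (φ b) ≤ ω (dist a b))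
    (hφ' : ∀ a b, dist a b ≤ ω (dist (φ a) (φ b))) : IsUniformInducing φ := by
  refine ⟨le_antisymm (tendsto_id'.mp ?_) (tendsto_iff_comap.mp ?_)⟩ <;>
    rw [tendsto_uniformity_iff_dist_tendsto_zero]
  · exact squeeze_zero (fun _ => dist_nonneg) (fun p => hφ' p.1 p.2)
      (hω.comp (tendsto_uniformity_iff_dist_tendsto_zero.mp tendsto_comap))
  · exact squeeze_zero (fun _ => dist_nonneg) (fun p => hφ p.1 p.2)
      (hω.comp (tendsto_uniformity_iff_dist_tendsto_zero.mp tendsto_id))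

section Harnack

open InnerProductSpace

variable {c z : ℂ} {R : ℝ}

theorem harnack_inequality {u : ℂ → ℝ} (hu : HarmonicContOnCl u (ball c R))
    (hu₀ : ∀ ζ ∈ sphere c R, 0 ≤ u ζ) (hz : z ∈ ball c R) :
    (R - dist z c) / (R + dist z c) * u c ≤ u z ∧
      u z ≤ (R + dist z c) / (R - dist z c) * u c := by
  have hR : 0 < R := nonempty_ball.mp ⟨z, hz⟩
  have hcont : ContinuousOn u (sphere c |R|) := by
    refine hu.continuousOn.mono ?_
    rw [abs_of_pos hR, closure_ball c hR.ne']
    exact sphere_subset_closedBall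
  have hint : ∀ t : ℝ, CircleIntegrable (t • u) c R := fun t =>
    (hcont.const_smul t).circleIntegrable'
  have hint' : CircleIntegrable (Complex.re ∘ herglotzRieszKernel c z • u) c R :=
    ((Complex.continuous_re.comp_continuousOn
      (continuousOn_herglotzRieszKernel_sphere hz)).smul hcont).circleIntegrable'
  have hmean : ∀ t : ℝ, Real.circleAverage (t • u) c R = t * u c := fun t => by
    rw [Real.circleAverage_smul, smul_eq_mul,
      InnerProductSpace.HarmonicContOnCl.circleAverage_eq (by rwa [abs_of_pos hR])]
  rw [← hu.circleAverage_re_herglotzRieszKernel_smul hz, ← hmean, ← hmean, dist_eq_norm]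
  refine ⟨Real.circleAverage_mono (hint _) hint' fun ζ hζ => ?_,
    Real.circleAverage_mono hint' (hint _) fun ζ hζ => ?_⟩ <;> rw [abs_of_pos hR] at hζ
  · exact mul_le_mul_of_nonneg_right (le_re_herglotzRieszKernel hζ hz) (hu₀ ζ hζ)
  · exact mul_le_mul_of_nonneg_right (re_herglotzRieszKernel_le hζ hz) (hu₀ ζ hζ)

lemma harmonicContOnCl_log_norm {w : ℂ → ℂ} {U : Set ℂ} (hU : IsOpen U)
    (hw : DiffContOnCl ℂ w U) (hw₀ : ∀ ζ ∈ closure U, w ζ ≠ 0) :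
    HarmonicContOnCl (fun ζ => Real.log ‖w ζ‖) U where
  harmonicOnNhd ζ hζ := (hw.differentiableOn.analyticAt (hU.mem_nhds hζ)).harmonicAt_log_norm
    (hw₀ ζ (subset_closure hζ))
  continuousOn := hw.continuousOn.norm.log fun ζ hζ => norm_ne_zero_iff.mpr (hw₀ ζ hζ)

theorem norm_div_le_rpow_norm_div {w : ℂ → ℂ} {K : ℝ} (hw : DiffContOnCl ℂ w (ball c R))
    (hw₀ : ∀ ζ ∈ closedBall c R, w ζ ≠ 0) (hwK : ∀ ζ ∈ closedBall c R, ‖w ζ‖ ≤ K)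
    (hz : z ∈ ball c R) :
    ‖w z‖ / K ≤ (‖w c‖ / K) ^ ((R - dist z c) / (R + dist z c)) ∧
      ‖w c‖ / K ≤ (‖w z‖ / K) ^ ((R - dist z c) / (R + dist z c)) := by
  have hR : 0 < R := nonempty_ball.mp ⟨z, hz⟩
  have hzc : 0 < R - dist z c := sub_pos.mpr hz
  have hc' : c ∈ closedBall c R := mem_closedBall_self hR.le
  have hz' : z ∈ closedBall c R := ball_subset_closedBall hz
  have hpos : ∀ ζ ∈ closedBall c R, 0 < ‖w ζ‖ := fun ζ hζ => norm_pos_iff.mpr (hw₀ ζ hζ)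
  have hK : 0 < K := (hpos c hc').trans_le (hwK c hc')
  obtain ⟨hlow, hup⟩ := harnack_inequality
    ((harmonicContOnCl_log_norm isOpen_ball hw
      (by rwa [closure_ball c hR.ne'])).fun_const_sub (Real.log K))
    (fun ζ hζ => sub_nonneg.mpr <| Real.log_le_log (hpos ζ (sphere_subset_closedBall hζ))
      (hwK ζ (sphere_subset_closedBall hζ))) hz
  have hzK : 0 < ‖w z‖ / K := div_pos (hpos z hz') hK
  have hcK : 0 < ‖w c‖ / K := div_pos (hpos c hc') hK
  rw [Real.le_rpow_iff_log_le hzK hcK, Real.le_rpow_iff_log_le hcK hzK,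
    Real.log_div (hpos z hz').ne' hK.ne', Real.log_div (hpos c hc').ne' hK.ne']
  constructor
  · linarith
  · rw [div_mul_eq_mul_div, le_div_iff₀ hzc] at hup
    rw [div_mul_eq_mul_div, le_div_iff₀ (by positivity)]
    linarith

end Harnack

section Bloch

lemma exists_ball_subset_forall_norm_le_two_mul {X E : Type*} [PseudoMetricSpace X] [ProperSpace X]
    [NormedAddCommGroup E] {F : X → E} {c : X} {r : ℝ} (hr : 0 ≤ r)
    (hF : ContinuousOn F (closedBall c r)) :
    ∃ a ρ, ball a ρ ⊆ ball c r ∧ (∀ z ∈ ball a ρ, ‖F z‖ ≤ 2 * ‖F a‖) ∧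
      r * ‖F c‖ ≤ 2 * ρ * ‖F a‖ := by
  obtain ⟨a, ha, hmax⟩ := (isCompact_closedBall c r).exists_isMaxOn
    ⟨c, mem_closedBall_self hr⟩ (f := fun z => (r - dist z c) * ‖F z‖) (by fun_prop)
  have hρ : 0 ≤ r - dist a c := sub_nonneg.mpr ha
  have hdist : ∀ z ∈ ball a ((r - dist a c) / 2), (r - dist a c) / 2 < r - dist z c := by
    intro z hz
    linarith [dist_triangle z a c, mem_ball.mp hz]
  refine ⟨a, (r - dist a c) / 2, fun z hz => ?_, fun z hz => ?_, ?_⟩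
  · exact mem_ball.mpr (by linarith [hdist z hz])
  · have hpos : 0 < (r - dist a c) / 2 := dist_nonneg.trans_lt hz
    have hz' : z ∈ closedBall c r := mem_closedBall.mpr (by linarith [hdist z hz])
    refine le_of_mul_le_mul_left ?_ hpos
    calc (r - dist a c) / 2 * ‖F z‖ ≤ (r - dist z c) * ‖F z‖ := by gcongr; exact (hdist z hz).le
      _ ≤ (r - dist a c) * ‖F a‖ := hmax hz'
      _ = (r - dist a c) / 2 * (2 * ‖F a‖) := by ring
  · calc r * ‖F c‖ = (r - dist c c) * ‖F c‖ := by rw [dist_self, sub_zero]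
      _ ≤ (r - dist a c) * ‖F a‖ := hmax (mem_closedBall_self hr)
      _ = 2 * ((r - dist a c) / 2) * ‖F a‖ := by ring

variable {g : ℂ → ℂ} {a c : ℂ} {r ρ M : ℝ}

lemma norm_sub_sub_deriv_mul_le {z : ℂ} (hg : DifferentiableOn ℂ g (ball a ρ))
    (hM : ∀ ζ ∈ ball a ρ, ‖deriv g ζ‖ ≤ M) (hz : z ∈ ball a ρ) :
    ‖g z - g a - deriv g a * (z - a)‖ ≤ 2 * M / ρ * ‖z - a‖ ^ 2 := by
  have ha : a ∈ ball a ρ := mem_ball_self (dist_nonneg.trans_lt hz)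
  have hsub : closedBall a (dist z a) ⊆ ball a ρ := closedBall_subset_ball hz
  have hschwarz : ∀ ζ ∈ closedBall a (dist z a),
      ‖deriv g ζ - deriv g a‖ ≤ 2 * M / ρ * dist z a := by
    intro ζ hζ
    have hmaps : MapsTo (deriv g) (ball a ρ) (closedBall (deriv g a) (2 * M)) := fun ξ hξ => by
      rw [mem_closedBall, dist_eq_norm]
      linarith [norm_sub_le (deriv g ξ) (deriv g a), hM ξ hξ, hM a ha]
    rw [← dist_eq_norm]
    refine (Complex.dist_le_div_mul_dist_of_mapsTo_ball (hg.deriv isOpen_ball) hmaps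
      (hsub hζ)).trans ?_
    have hM0 : 0 ≤ M := (norm_nonneg _).trans (hM a ha)
    have hρ0 : 0 ≤ ρ := nonempty_ball.mp ⟨a, ha⟩ |>.le
    gcongr
    exact hζ
  have hderiv : ∀ ζ ∈ closedBall a (dist z a), HasDerivWithinAt
      (fun ζ => g ζ - deriv g a * ζ) (deriv g ζ - deriv g a) (closedBall a (dist z a)) ζ :=
    fun ζ hζ => ((hg.differentiableAt (isOpen_ball.mem_nhds (hsub hζ))).hasDerivAt.fun_sub
      (hasDerivAt_const_mul _)).hasDerivWithinAt
  calc ‖g z - g a - deriv g a * (z - a)‖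
      = ‖(g z - deriv g a * z) - (g a - deriv g a * a)‖ := by congr 1; ring
    _ ≤ 2 * M / ρ * dist z a * ‖z - a‖ :=
      (convex_closedBall a _).norm_image_sub_le_of_norm_hasDerivWithin_le hderiv hschwarz
        (mem_closedBall_self dist_nonneg) (mem_closedBall.mpr le_rfl)
    _ = 2 * M / ρ * ‖z - a‖ ^ 2 := by rw [dist_eq_norm]; ring

theorem ball_subset_image_ball_of_norm_deriv_le (hg : DifferentiableOn ℂ g (ball a ρ))
    (hga : ∀ z ∈ ball a ρ, ‖deriv g z‖ ≤ 2 * ‖deriv g a‖) :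
    ball (g a) (ρ * ‖deriv g a‖ / 32) ⊆ g '' ball a ρ := by
  rcases le_or_gt (ρ * ‖deriv g a‖) 0 with hdeg | hpos
  · rw [ball_eq_empty.mpr (by linarith)]
    exact empty_subset _
  have hρ : 0 < ρ := pos_of_mul_pos_left hpos (norm_nonneg _)
  have hm : 0 < ‖deriv g a‖ := pos_of_mul_pos_right hpos hρ.le
  have hsub : closedBall a (ρ / 8) ⊆ ball a ρ := closedBall_subset_ball (by linarith)
  have hlow : ∀ z ∈ sphere a (ρ / 8), ρ * ‖deriv g a‖ / 16 ≤ ‖g z - g a‖ := by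
    intro z hz
    have hza : ‖z - a‖ = ρ / 8 := by rw [← dist_eq_norm]; exact hz
    have htaylor := norm_sub_sub_deriv_mul_le hg hga (hsub (sphere_subset_closedBall hz))
    have htri := norm_sub_norm_le (deriv g a * (z - a)) (g z - g a)
    rw [norm_sub_rev (deriv g a * (z - a)), norm_mul, hza] at htri
    rw [hza, show 2 * (2 * ‖deriv g a‖) / ρ * (ρ / 8) ^ 2 = ρ * ‖deriv g a‖ / 16 by
      field_simp; norm_num] at htaylor
    linarith
  have hne : ∃ᶠ z in 𝓝 a, g z ≠ g a := by
    have hda := (hg.differentiableAt (ball_mem_nhds a hρ)).hasDerivAt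
    exact ((hda.eventually_ne (norm_pos_iff.mp hm)).frequently).filter_mono nhdsWithin_le_nhds
  calc ball (g a) (ρ * ‖deriv g a‖ / 32) = ball (g a) (ρ * ‖deriv g a‖ / 16 / 2) := by
        congr 1; ring
    _ ⊆ g '' closedBall a (ρ / 8) := ((hg.mono hsub).diffContOnCl_ball Subset.rfl)
        |>.ball_subset_image_closedBall (by positivity) hlow hne
    _ ⊆ g '' ball a ρ := image_mono hsub

theorem exists_ball_subset_image_ball (hr : 0 ≤ r) (hg : AnalyticOnNhd ℂ g (closedBall c r)) :
    ∃ p, ball p (r * ‖deriv g c‖ / 64) ⊆ g '' ball c r := by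
  obtain ⟨a, ρ, hsub, hle, hac⟩ := exists_ball_subset_forall_norm_le_two_mul hr
    hg.deriv.continuousOn
  refine ⟨g a, (ball_subset_ball ?_).trans <|
    (ball_subset_image_ball_of_norm_deriv_le ?_ hle).trans (image_mono hsub)⟩
  · linarith
  · exact hg.differentiableOn.mono (hsub.trans ball_subset_closedBall)

theorem norm_deriv_le_of_forall_not_ball_subset {R : ℝ} (hr : 0 < r)
    (hg : AnalyticOnNhd ℂ g (closedBall c r)) (hR : ∀ p, ¬ball p R ⊆ g '' ball c r) :
    ‖deriv g c‖ ≤ 64 * R / r := by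
  obtain ⟨p, hp⟩ := exists_ball_subset_image_ball hr.le hg
  by_contra! hlt
  rw [div_lt_iff₀ hr] at hlt
  exact hR p ((ball_subset_ball (by linarith)).trans hp)

end Bloch

section Lifting

lemma differentiableAt_of_comp_hasStrictDerivAt {𝕜 : Type*} [NontriviallyNormedField 𝕜]
    [CompleteSpace 𝕜] {E : Type*} [NormedAddCommGroup E] [NormedSpace 𝕜 E] {p : 𝕜 → 𝕜} {p' : 𝕜}
    {v : E → 𝕜} {z : E} (hv : ContinuousAt v z) (hp : HasStrictDerivAt p p' (v z)) (hp' : p' ≠ 0)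
    (hpv : DifferentiableAt 𝕜 (fun ζ => p (v ζ)) z) : DifferentiableAt 𝕜 v z := by
  have hinv : (fun ζ => hp.localInverse p p' (v z) hp' (p (v ζ))) =ᶠ[𝓝 z] v :=
    hv.eventually (hp.hasStrictFDerivAt_equiv hp').eventually_left_inverse
  exact ((hp.to_localInverse hp').hasDerivAt.differentiableAt.comp z hpv).congr_of_eventuallyEq
    hinv.symm

lemma isSimplyConnected_ball {E : Type*} [NormedAddCommGroup E] [NormedSpace ℝ E] {x : E} {r : ℝ}
    (hr : 0 < r) : IsSimplyConnected (ball x r) :=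
  have := (convex_ball x r).contractibleSpace (nonempty_ball.mpr hr)
  SimplyConnectedSpace.ofContractible (ball x r)

variable {U : Set ℂ} {u w : ℂ → ℂ} {z₀ c : ℂ}

theorem exists_differentiableOn_exp_eq (hU : IsSimplyConnected U) (hUo : IsOpen U)
    (hw : DifferentiableOn ℂ w U) (hw₀ : ∀ z ∈ U, w z ≠ 0) (hz₀ : z₀ ∈ U) (hc : exp c = w z₀) :
    ∃ v : ℂ → ℂ, DifferentiableOn ℂ v U ∧ v z₀ = c ∧ ∀ z ∈ U, exp (v z) = w z := by
  obtain ⟨v, hv, hvw⟩ := Complex.exists_continuousOn_eqOn_exp_comp hU hUo hw.continuousOn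
    (by rintro ⟨z, hz, hwz⟩; exact hw₀ z hz hwz)
  have hdiff : DifferentiableOn ℂ v U := fun z hz => by
    have hUz := hUo.mem_nhds hz
    refine (differentiableAt_of_comp_hasStrictDerivAt (hv.continuousAt hUz)
      (Complex.hasStrictDerivAt_exp (v z)) (Complex.exp_ne_zero _) ?_).differentiableWithinAt
    exact (hw.differentiableAt hUz).congr_of_eventuallyEq (hvw.eventuallyEq_of_mem hUz)
  refine ⟨fun z => v z + (c - v z₀), hdiff.add_const _, by ring, fun z hz => ?_⟩
  have hvz₀ : exp (v z₀) = w z₀ := hvw hz₀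
  rw [Complex.exp_add, Complex.exp_sub, hc, hvz₀, div_self (hw₀ z₀ hz₀), mul_one]
  exact hvw hz

theorem exists_differentiableOn_sq_eq (hU : IsSimplyConnected U) (hUo : IsOpen U)
    (hw : DifferentiableOn ℂ w U) (hw₀ : ∀ z ∈ U, w z ≠ 0) (hz₀ : z₀ ∈ U) (hc : c ^ 2 = w z₀) :
    ∃ s : ℂ → ℂ, DifferentiableOn ℂ s U ∧ s z₀ = c ∧ ∀ z ∈ U, s z ^ 2 = w z := by
  have hc₀ : c ≠ 0 := by
    rintro rfl
    exact hw₀ z₀ hz₀ (by rw [← hc, zero_pow two_ne_zero])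
  obtain ⟨v, hv, hvc, hvw⟩ := exists_differentiableOn_exp_eq (c := 2 * Complex.log c) hU hUo hw hw₀
    hz₀ (by rw [← Nat.cast_two, Complex.exp_nat_mul, Complex.exp_log hc₀, hc])
  refine ⟨fun z => exp (v z / 2), (hv.div_const 2).cexp, ?_, fun z hz => ?_⟩
  · simp only [hvc, mul_div_cancel_left₀ _ (two_ne_zero' ℂ), Complex.exp_log hc₀]
  · rw [← hvw z hz, ← Complex.exp_nat_mul, Nat.cast_two, mul_div_cancel₀ _ two_ne_zero]

theorem exists_differentiableOn_cos_eq (hU : IsSimplyConnected U) (hUo : IsOpen U)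
    (hu : DifferentiableOn ℂ u U) (hu₁ : ∀ z ∈ U, u z ≠ 1) (hu₂ : ∀ z ∈ U, u z ≠ -1)
    (hz₀ : z₀ ∈ U) (hc : cos c = u z₀) :
    ∃ φ : ℂ → ℂ, DifferentiableOn ℂ φ U ∧ φ z₀ = c ∧ ∀ z ∈ U, cos (φ z) = u z := by
  obtain ⟨s, hs, hsc, hsu⟩ := exists_differentiableOn_sq_eq (w := fun z => 1 - u z ^ 2)
    (c := sin c) hU hUo ((hu.pow 2).const_sub 1)
    (fun z hz h => sq_ne_one_iff.mpr ⟨hu₁ z hz, hu₂ z hz⟩ (sub_eq_zero.mp h).symm)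
    hz₀ (by rw [← hc, Complex.sin_sq])
  have hconj : ∀ z ∈ U, (u z + s z * I) * (u z - s z * I) = 1 := fun z hz => by
    linear_combination hsu z hz - s z ^ 2 * Complex.I_sq
  obtain ⟨v, hv, hvc, hvu⟩ := exists_differentiableOn_exp_eq (w := fun z => u z + s z * I)
    (c := c * I) hU hUo (hu.add (hs.mul_const I))
    (fun z hz => left_ne_zero_of_mul_eq_one (hconj z hz)) hz₀
    (by rw [Complex.exp_mul_I, hsc, hc])
  refine ⟨fun z => -I * v z, hv.const_mul _, ?_, fun z hz => ?_⟩
  · linear_combination -I * hvc - c * Complex.I_sq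
  · have hI : -I * v z * I = v z := by linear_combination -v z * Complex.I_sq
    have hinv : exp (-v z) = u z - s z * I := by
      rw [Complex.exp_neg, hvu z hz]
      exact inv_eq_of_mul_eq_one_right (hconj z hz)
    rw [Complex.cos, neg_mul, hI, hvu z hz, hinv]
    ring

lemma exists_int_abs_sub_mul_le {T : ℝ} (hT : 0 < T) (x : ℝ) : ∃ n : ℤ, |x - n * T| ≤ T / 2 := by
  refine ⟨round (x / T), ?_⟩
  calc |x - round (x / T) * T| = |x / T - round (x / T)| * T := by
        rw [← abs_of_pos hT, ← abs_mul, abs_of_pos hT, sub_mul, div_mul_cancel₀ x hT.ne']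
    _ ≤ 1 / 2 * T := by gcongr; exact abs_sub_round _
    _ = T / 2 := by ring

lemma abs_im_le_norm_cos (w : ℂ) : |w.im| ≤ ‖cos w‖ := by
  have hsinh : |w.im| ≤ |Real.sinh w.im| := by
    rw [Real.abs_sinh]
    exact Real.self_le_sinh_iff.mpr (abs_nonneg _)
  have hnorm : ‖cos w‖ ^ 2 = Real.cos w.re ^ 2 + Real.sinh w.im ^ 2 := by
    have hcos : cos w = ⟨Real.cos w.re * Real.cosh w.im, -(Real.sin w.re * Real.sinh w.im)⟩ := by
      rw [Complex.cos_eq]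
      simp [Complex.ext_iff, ← Complex.ofReal_cos, ← Complex.ofReal_sin, ← Complex.ofReal_cosh,
        ← Complex.ofReal_sinh]
    rw [Complex.sq_norm, hcos, Complex.normSq_mk]
    linear_combination Real.sinh w.im ^ 2 * Real.sin_sq_add_cos_sq w.re +
      Real.cos w.re ^ 2 * Real.cosh_sq w.im
  refine hsinh.trans (abs_le_of_sq_le_sq ?_ (norm_nonneg _))
  nlinarith [sq_nonneg (Real.cos w.re)]

lemma exists_cos_eq_norm_le (u : ℂ) : ∃ c, cos c = u ∧ ‖c‖ ≤ Real.pi + ‖u‖ := by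
  obtain ⟨w, rfl⟩ := Complex.cos_surjective u
  obtain ⟨n, hn⟩ := exists_int_abs_sub_mul_le Real.two_pi_pos w.re
  have hcos : cos (w - n * (2 * Real.pi)) = cos w := Complex.cos_sub_int_mul_two_pi w n
  refine ⟨w - n * (2 * Real.pi), hcos, (Complex.norm_le_abs_re_add_abs_im _).trans
    (add_le_add ?_ (hcos ▸ abs_im_le_norm_cos _))⟩
  simpa [mul_div_cancel_left₀] using hn

end Lifting

section Schottky

/-- The function `(1 + cos (π cos w)) / 2`, in Landau's approach to Picard's and Schottky's theorems
a substitute for the modular covering of `ℂ ∖ {0, 1}`: it is onto `ℂ`, functions omitting `0` and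
`1` lift through it, and its lifts miss a relatively dense set, namely `cos ⁻¹' ℤ`. -/
noncomputable def landauMap (w : ℂ) : ℂ := (1 + cos (Real.pi * cos w)) / 2

lemma norm_cos_le_exp_norm (w : ℂ) : ‖cos w‖ ≤ Real.exp ‖w‖ := by
  have hadd := Complex.norm_exp_le_exp_norm (w * I)
  have hsub := Complex.norm_exp_le_exp_norm (-w * I)
  simp only [norm_mul, norm_neg, Complex.norm_I, mul_one] at hadd hsub
  rw [Complex.cos, norm_div, Complex.norm_two, div_le_iff₀ two_pos]
  linarith [norm_add_le (exp (w * I)) (exp (-w * I))]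

lemma norm_landauMap_le (w : ℂ) : ‖landauMap w‖ ≤ Real.exp (Real.pi * Real.exp ‖w‖) := by
  have hcos : ‖cos (Real.pi * cos w)‖ ≤ Real.exp (Real.pi * Real.exp ‖w‖) := by
    refine (norm_cos_le_exp_norm _).trans (Real.exp_le_exp.mpr ?_)
    rw [norm_mul, Complex.norm_of_nonneg Real.pi_pos.le]
    exact mul_le_mul_of_nonneg_left (norm_cos_le_exp_norm w) Real.pi_pos.le
  have hone : 1 ≤ Real.exp (Real.pi * Real.exp ‖w‖) := Real.one_le_exp (by positivity)
  rw [landauMap, norm_div, Complex.norm_two, div_le_iff₀ two_pos]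
  linarith [norm_add_le 1 (cos (Real.pi * cos w)), norm_one (α := ℂ)]

lemma exists_landauMap_eq_norm_le (u : ℂ) : ∃ w, landauMap w = u ∧ ‖w‖ ≤ ‖u‖ + 6 := by
  have hpi : (Real.pi : ℂ) ≠ 0 := Complex.ofReal_ne_zero.mpr Real.pi_ne_zero
  obtain ⟨v, hv, hv_le⟩ := exists_cos_eq_norm_le (2 * u - 1)
  obtain ⟨w, hw, hw_le⟩ := exists_cos_eq_norm_le (v / Real.pi)
  refine ⟨w, ?_, ?_⟩
  · rw [landauMap, hw, mul_div_cancel₀ _ hpi, hv]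
    ring
  · have hu : ‖2 * u - 1‖ ≤ 2 * ‖u‖ + 1 := by
      simpa only [norm_mul, Complex.norm_two, norm_one] using norm_sub_le (2 * u) 1
    have hv_div : ‖v / Real.pi‖ ≤ ‖u‖ + 2 := by
      rw [norm_div, Complex.norm_of_nonneg Real.pi_pos.le, div_le_iff₀ Real.pi_pos]
      nlinarith [Real.pi_gt_three, norm_nonneg u]
    linarith [Real.pi_le_four]

lemma cos_int_mul_pi_eq_one_or_neg_one (n : ℤ) :
    cos (n * Real.pi) = 1 ∨ cos (n * Real.pi) = -1 := by
  rw [← sq_eq_one_iff, Complex.cos_sq', Complex.sin_int_mul_pi, zero_pow two_ne_zero, sub_zero]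

lemma landauMap_eq_zero_or_one {w : ℂ} {n : ℤ} (hw : cos w = n) :
    landauMap w = 0 ∨ landauMap w = 1 := by
  rw [landauMap, hw, mul_comm]
  rcases cos_int_mul_pi_eq_one_or_neg_one n with hcos | hcos
  · exact .inr (by rw [hcos]; norm_num)
  · exact .inl (by rw [hcos]; norm_num)

theorem exists_differentiableOn_landauMap_eq {U : Set ℂ} {h : ℂ → ℂ} {z₀ c : ℂ}
    (hU : IsSimplyConnected U) (hUo : IsOpen U) (hh : DifferentiableOn ℂ h U)
    (h₀ : ∀ z ∈ U, h z ≠ 0) (h₁ : ∀ z ∈ U, h z ≠ 1) (hz₀ : z₀ ∈ U) (hc : landauMap c = h z₀) :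
    ∃ ψ : ℂ → ℂ, DifferentiableOn ℂ ψ U ∧ ψ z₀ = c ∧ ∀ z ∈ U, landauMap (ψ z) = h z := by
  have hpi : (Real.pi : ℂ) ≠ 0 := Complex.ofReal_ne_zero.mpr Real.pi_ne_zero
  obtain ⟨φ, hφ, hφc, hφh⟩ := exists_differentiableOn_cos_eq (u := fun z => 2 * h z - 1)
    (c := Real.pi * cos c) hU hUo ((hh.const_mul 2).sub_const 1)
    (fun z hz hz' => h₁ z hz (by linear_combination hz' / 2))
    (fun z hz hz' => h₀ z hz (by linear_combination hz' / 2)) hz₀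
    (by rw [← hc, landauMap]; ring)
  have hφ_ne_int : ∀ z ∈ U, ∀ n : ℤ, φ z / Real.pi ≠ n := by
    intro z hz n hn
    obtain ⟨w, hw⟩ := Complex.cos_surjective n
    have hhz : landauMap w = h z := by
      rw [landauMap, hw, ← hn, mul_div_cancel₀ _ hpi, hφh z hz]
      ring
    rcases landauMap_eq_zero_or_one hw with hzero | hone
    · exact h₀ z hz (hhz ▸ hzero)
    · exact h₁ z hz (hhz ▸ hone)
  obtain ⟨ψ, hψ, hψc, hψφ⟩ := exists_differentiableOn_cos_eq (u := fun z => φ z / Real.pi) (c := c)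
    hU hUo (hφ.div_const _) (fun z hz => by exact_mod_cast hφ_ne_int z hz 1)
    (fun z hz => by exact_mod_cast hφ_ne_int z hz (-1)) hz₀
    (by rw [hφc, mul_div_cancel_left₀ _ hpi])
  refine ⟨ψ, hψ, hψc, fun z hz => ?_⟩
  rw [landauMap, hψφ z hz, mul_div_cancel₀ _ hpi, hφh z hz]
  ring

lemma exists_cosh_eq_int_abs_sub_le (y : ℝ) : ∃ t : ℝ, |t - y| ≤ 2 ∧ ∃ n : ℤ, Real.cosh t = n := by
  wlog hy : 0 ≤ y generalizing y
  · obtain ⟨t, ht, n, hn⟩ := this (-y) (by linarith)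
    refine ⟨-t, ?_, n, by rw [Real.cosh_neg, hn]⟩
    rwa [← abs_neg, neg_sub, sub_neg_eq_add, add_comm, ← sub_neg_eq_add]
  have hgrowth : Real.cosh y + 1 ≤ Real.cosh (y + 2) := by
    have hcosh : 2 ≤ Real.cosh 2 := by
      rw [Real.cosh_eq]
      nlinarith [Real.quadratic_le_exp_of_nonneg (zero_le_two (α := ℝ)), Real.exp_pos (-2)]
    have hsinh : 0 ≤ Real.sinh y * Real.sinh 2 :=
      mul_nonneg (Real.sinh_nonneg_iff.mpr hy) (Real.sinh_nonneg_iff.mpr zero_le_two)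
    rw [Real.cosh_add]
    nlinarith [Real.one_le_cosh y]
  obtain ⟨t, ht, htn⟩ := intermediate_value_Icc (by linarith : y ≤ y + 2)
    Real.continuous_cosh.continuousOn
    ⟨Int.le_ceil (Real.cosh y), (Int.ceil_lt_add_one _).le.trans hgrowth⟩
  exact ⟨t, abs_le.mpr ⟨by linarith [ht.1], by linarith [ht.2]⟩, _, htn⟩

lemma exists_cos_eq_int_dist_lt (p : ℂ) : ∃ q, dist q p < 4 ∧ ∃ n : ℤ, cos q = n := by
  obtain ⟨k, hk⟩ := exists_int_abs_sub_mul_le Real.pi_pos p.re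
  obtain ⟨t, ht, n, hn⟩ := exists_cosh_eq_int_abs_sub_le p.im
  refine ⟨k * Real.pi + t * I, ?_, ?_⟩
  · have hre : |(k * Real.pi + t * I - p).re| ≤ Real.pi / 2 := by
      rw [abs_sub_comm] at hk
      simpa using hk
    have him : |(k * Real.pi + t * I - p).im| ≤ 2 := by simpa using ht
    rw [dist_eq_norm]
    linarith [Complex.norm_le_abs_re_add_abs_im (k * Real.pi + t * I - p), Real.pi_lt_four]
  · rw [Complex.cos_add_mul_I, Complex.sin_int_mul_pi, ← Complex.ofReal_cosh, hn]
    rcases cos_int_mul_pi_eq_one_or_neg_one k with hcos | hcos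
    · exact ⟨n, by rw [hcos]; simp⟩
    · exact ⟨-n, by rw [hcos]; simp⟩

lemma norm_deriv_le_of_cos_ne_int {ψ : ℂ → ℂ} {c : ℂ} {r : ℝ} (hr : 0 < r)
    (hψ : AnalyticOnNhd ℂ ψ (closedBall c r)) (hψ' : ∀ z ∈ ball c r, ∀ n : ℤ, cos (ψ z) ≠ n) :
    ‖deriv ψ c‖ ≤ 256 / r := by
  refine (norm_deriv_le_of_forall_not_ball_subset hr hψ (R := 4) fun p hp => ?_).trans_eq
    (by norm_num)
  obtain ⟨q, hq, n, hn⟩ := exists_cos_eq_int_dist_lt p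
  obtain ⟨z, hz, rfl⟩ := hp hq
  exact hψ' z hz n hn

theorem schottky {h : ℂ → ℂ} {c z : ℂ} {R : ℝ} (hh : DifferentiableOn ℂ h (ball c R))
    (h₀ : ∀ ζ ∈ ball c R, h ζ ≠ 0) (h₁ : ∀ ζ ∈ ball c R, h ζ ≠ 1) (hz : z ∈ ball c R) :
    ‖h z‖ ≤ Real.exp (Real.pi * Real.exp (‖h c‖ + 6 + 512 / (R - dist z c) * dist z c)) := by
  have hR : 0 < R := nonempty_ball.mp ⟨z, hz⟩
  obtain ⟨w, hw, hw_le⟩ := exists_landauMap_eq_norm_le (h c)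
  obtain ⟨ψ, hψ, hψc, hψh⟩ := exists_differentiableOn_landauMap_eq (isSimplyConnected_ball hR)
    isOpen_ball hh h₀ h₁ (mem_ball_self hR) hw
  have hcos : ∀ ζ ∈ ball c R, ∀ n : ℤ, cos (ψ ζ) ≠ n := by
    intro ζ hζ n hn
    rcases landauMap_eq_zero_or_one hn with hzero | hone
    · exact h₀ ζ hζ (hψh ζ hζ ▸ hzero)
    · exact h₁ ζ hζ (hψh ζ hζ ▸ hone)
  have hgap : 0 < (R - dist z c) / 2 := half_pos (sub_pos.mpr hz)
  have hderiv : ∀ ζ ∈ closedBall c (dist z c), ‖deriv ψ ζ‖ ≤ 512 / (R - dist z c) := by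
    intro ζ hζ
    have hsub : closedBall ζ ((R - dist z c) / 2) ⊆ ball c R :=
      closedBall_subset_ball' (by linarith [mem_closedBall.mp hζ])
    refine (norm_deriv_le_of_cos_ne_int hgap
      ((hψ.analyticOnNhd isOpen_ball).mono hsub)
      fun ξ hξ => hcos ξ (hsub (ball_subset_closedBall hξ))).trans_eq ?_
    rw [div_div_eq_mul_div]
    norm_num
  have hψz : ‖ψ z - w‖ ≤ 512 / (R - dist z c) * dist z c :=
    calc ‖ψ z - w‖ ≤ 512 / (R - dist z c) * ‖z - c‖ := by
          rw [← hψc]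
          exact (convex_closedBall c (dist z c)).norm_image_sub_le_of_norm_deriv_le
            (fun ζ hζ => hψ.differentiableAt <|
              isOpen_ball.mem_nhds (closedBall_subset_ball hz hζ))
            hderiv (mem_closedBall_self dist_nonneg) (mem_closedBall.mpr le_rfl)
      _ = 512 / (R - dist z c) * dist z c := by rw [← dist_eq_norm]
  rw [← hψh z hz]
  refine (norm_landauMap_le _).trans ?_
  gcongr
  linarith [norm_sub_norm_le (ψ z) w]

end Schottky

/-- A holomorphic motion `f` of a set `A ⊆ ℂ` over the open unit disk, with the parameter as the
first argument of `f`. Values `f z a` with `‖z‖ ≥ 1` or `a ∉ A` are irrelevant. -/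
structure IsHolomorphicMotion (f : ℂ → ℂ → ℂ) (A : Set ℂ) : Prop where
  differentiableOn : ∀ a ∈ A, DifferentiableOn ℂ (fun z => f z a) (ball 0 1)
  injOn : ∀ z ∈ ball (0 : ℂ) 1, InjOn (fun a => f z a) A
  apply_zero : ∀ a ∈ A, f 0 a = a

namespace IsHolomorphicMotion

variable {f : ℂ → ℂ → ℂ} {A : Set ℂ} {z : ℂ} {R : ℝ}

lemma sub_ne_zero (hf : IsHolomorphicMotion f A) {a b : ℂ} (ha : a ∈ A) (hb : b ∈ A) (hab : a ≠ b)
    (hz : z ∈ ball 0 1) : f z a - f z b ≠ 0 :=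
  fun h => hab (hf.injOn z hz ha hb (_root_.sub_eq_zero.mp h))

/-- Schottky's theorem applied to `(f z a - f z p) / (f z q - f z p)`, which omits `0` and `1`. -/
lemma norm_sub_le_of_ne (hf : IsHolomorphicMotion f A) {a p q : ℂ} (ha : a ∈ A) (hp : p ∈ A)
    (hq : q ∈ A) (hap : a ≠ p) (haq : a ≠ q) (hpq : p ≠ q) (hz : z ∈ ball 0 1) :
    ‖f z a - f z p‖ ≤
      Real.exp (Real.pi * Real.exp (‖a - p‖ / ‖q - p‖ + 6 + 512 / (1 - ‖z‖) * ‖z‖)) *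
        ‖f z q - f z p‖ := by
  have hden : ∀ ζ ∈ ball (0 : ℂ) 1, f ζ q - f ζ p ≠ 0 := fun ζ => hf.sub_ne_zero hq hp hpq.symm
  have hschottky := schottky (h := fun ζ => (f ζ a - f ζ p) / (f ζ q - f ζ p))
    (((hf.differentiableOn a ha).sub (hf.differentiableOn p hp)).div
      ((hf.differentiableOn q hq).sub (hf.differentiableOn p hp)) hden)
    (fun ζ hζ => div_ne_zero (hf.sub_ne_zero ha hp hap hζ) (hden ζ hζ))
    (fun ζ hζ h => hf.sub_ne_zero ha hq haq hζ <| by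
      linear_combination (div_eq_one_iff_eq (hden ζ hζ)).mp h) hz
  rwa [norm_div, div_le_iff₀ (norm_pos_iff.mpr (hden z hz)), hf.apply_zero a ha, hf.apply_zero p hp,
    hf.apply_zero q hq, norm_div, dist_zero_right] at hschottky

lemma exists_forall_closedBall_norm_le (hf : IsHolomorphicMotion f A) (hR : R < 1) {a : ℂ}
    (ha : a ∈ A) : ∃ C, 0 ≤ C ∧ ∀ z ∈ closedBall 0 R, ‖f z a‖ ≤ C := by
  obtain ⟨C, hC⟩ := (isCompact_closedBall (0 : ℂ) R).exists_bound_of_continuousOn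
    ((hf.differentiableOn a ha).continuousOn.mono (closedBall_subset_ball hR))
  exact ⟨max C 0, le_max_right _ _, fun z hz => (hC z hz).trans (le_max_left _ _)⟩

lemma exists_forall_norm_le (hf : IsHolomorphicMotion f A) (N : ℝ) (hR : R < 1) :
    ∃ C, ∀ a ∈ A ∩ closedBall 0 N, ∀ z ∈ closedBall 0 R, ‖f z a‖ ≤ C := by
  rcases A.subsingleton_or_nontrivial with hA | ⟨p, hp, q, hq, hpq⟩
  · rcases hA.eq_empty_or_singleton with rfl | ⟨p, rfl⟩
    · exact ⟨0, fun a ha => ha.1.elim⟩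
    · obtain ⟨C, -, hC⟩ := hf.exists_forall_closedBall_norm_le hR (mem_singleton p)
      exact ⟨C, fun a ha => ha.1 ▸ hC⟩
  obtain ⟨P, hP₀, hP⟩ := hf.exists_forall_closedBall_norm_le hR hp
  obtain ⟨Q, hQ₀, hQ⟩ := hf.exists_forall_closedBall_norm_le hR hq
  set E := Real.exp (Real.pi * Real.exp ((N + ‖p‖) / ‖q - p‖ + 6 + 512 / (1 - R) * R))
  have hE : 0 ≤ E * (Q + P) := by positivity
  refine ⟨E * (Q + P) + P + Q, fun a ⟨ha, haN⟩ z hz => ?_⟩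
  rcases eq_or_ne a p with rfl | hap
  · linarith [hP z hz]
  rcases eq_or_ne a q with rfl | haq
  · linarith [hQ z hz]
  rw [mem_closedBall_zero_iff] at haN
  have hzR : ‖z‖ ≤ R := mem_closedBall_zero_iff.mp hz
  have : 0 < 1 - R := sub_pos.mpr hR
  have hap_le : ‖f z a - f z p‖ ≤ E * (Q + P) := by
    refine (hf.norm_sub_le_of_ne ha hp hq hap haq hpq (closedBall_subset_ball hR hz)).trans
      (mul_le_mul (Real.exp_le_exp.mpr ?_) ?_ (norm_nonneg _) (Real.exp_pos _).le)
    · gcongr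
      exact (norm_sub_le a p).trans (by gcongr)
    · exact (norm_sub_le _ _).trans (add_le_add (hQ z hz) (hP z hz))
  linarith [norm_sub_norm_le (f z a) (f z p), hP z hz]

lemma exists_holder (hf : IsHolomorphicMotion f A) (N : ℝ) (hz : z ∈ ball 0 1) :
    ∃ K > 0, ∃ κ > (0 : ℝ), ∀ a ∈ A ∩ closedBall 0 N, ∀ b ∈ A ∩ closedBall 0 N,
      dist (f z a) (f z b) / K ≤ (dist a b / K) ^ κ ∧
        dist a b / K ≤ (dist (f z a) (f z b) / K) ^ κ := by
  obtain ⟨R, hzR, hR⟩ := exists_between (mem_ball.mp hz)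
  have hR₀ : 0 < R := dist_nonneg.trans_lt hzR
  obtain ⟨C, hC⟩ := hf.exists_forall_norm_le N hR
  have hκ : 0 < (R - dist z 0) / (R + dist z 0) :=
    div_pos (sub_pos.mpr hzR) (add_pos_of_pos_of_nonneg hR₀ dist_nonneg)
  refine ⟨2 * |C| + 1, by positivity, (R - dist z 0) / (R + dist z 0), hκ, fun a ha b hb => ?_⟩
  rcases eq_or_ne a b with rfl | hab
  · simp only [dist_self, zero_div, Real.zero_rpow hκ.ne', le_refl, and_self]
  have hsub : closedBall (0 : ℂ) R ⊆ ball 0 1 := closedBall_subset_ball hR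
  have hbound : ∀ ζ ∈ closedBall 0 R, ‖f ζ a - f ζ b‖ ≤ 2 * |C| + 1 := fun ζ hζ => by
    linarith [norm_sub_le (f ζ a) (f ζ b), hC a ha ζ hζ, hC b hb ζ hζ, le_abs_self C]
  have hharnack := norm_div_le_rpow_norm_div (w := fun ζ => f ζ a - f ζ b)
    ((((hf.differentiableOn a ha.1).sub (hf.differentiableOn b hb.1)).mono hsub).diffContOnCl_ball
      Subset.rfl)
    (fun ζ hζ => hf.sub_ne_zero ha.1 hb.1 hab (hsub hζ)) hbound hzR
  simpa only [hf.apply_zero a ha.1, hf.apply_zero b hb.1, ← dist_eq_norm] using hharnack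

theorem isUniformInducing_domRestrict (hf : IsHolomorphicMotion f A) (N : ℝ) (hz : z ∈ ball 0 1) :
    IsUniformInducing ((A ∩ closedBall 0 N).domRestrict (f z)) := by
  obtain ⟨K, hK, κ, hκ, hholder⟩ := hf.exists_holder N hz
  have hω : Tendsto (fun t : ℝ => (t / K) ^ κ * K) (𝓝 0) (𝓝 0) := by
    have hcont : Continuous fun t : ℝ => (t / K) ^ κ * K :=
      ((continuous_id'.div_const K).rpow_const fun _ => .inr hκ.le).mul_const K
    simpa only [zero_div, Real.zero_rpow hκ.ne', zero_mul] using hcont.tendsto 0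
  exact isUniformInducing_of_dist_le hω
    (fun a b => (div_le_iff₀ hK).mp (hholder a a.2 b b.2).1)
    (fun a b => (div_le_iff₀ hK).mp (hholder a a.2 b b.2).2)

end IsHolomorphicMotion

/-- Extension λ-lemma: for each parameter λ in the unit disk, the map
`a ↦ f λ a` of a holomorphic motion extends to a continuous injection
of the closure of `A` into `ℂ`. -/
theorem stmt_0 (A : Set ℂ) (f : ℂ → ℂ → ℂ)
    (hHol : ∀ a ∈ A, DifferentiableOn ℂ (fun l => f l a) (Metric.ball (0:ℂ) 1))
    (hInj : ∀ l ∈ Metric.ball (0:ℂ) 1, Set.InjOn (fun a => f l a) A)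
    (hId : ∀ a ∈ A, f 0 a = a) :
    ∀ l ∈ Metric.ball (0:ℂ) 1, ∃ g : ℂ → ℂ,
      ContinuousOn g (closure A) ∧ Set.InjOn g (closure A) ∧
      ∀ a ∈ A, g a = f l a := by
  intro l hl
  have hf : IsHolomorphicMotion f A := ⟨hHol, hInj, hId⟩
  have hmem : ∀ x : ℂ, ∀ N ≥ ‖x‖, closedBall 0 (N + 1) ∈ 𝓝 x := fun x N hN =>
    closedBall_mem_nhds_of_mem (mem_ball_zero_iff.mpr (hN.trans_lt (lt_add_one N)))
  exact exists_continuousOn_injOn_closure_of_isUniformInducing fun x _ y _ =>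
    ⟨closedBall 0 (max ‖x‖ ‖y‖ + 1), ⟨hmem x _ (le_max_left _ _), hmem y _ (le_max_right _ _)⟩,
      hf.isUniformInducing_domRestrict _ hl⟩
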